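/- Let d ≥ 1, let γ be the standard Gaussian measure on ℝ^d, and let a, b ∈ ℝ^d. Then ∫ erf(⟨a,z⟩) · erf(⟨b,z⟩) dγ(z) = (2/π) · arcsin( 2⟨a,b⟩ / √( (1 + 2‖a‖₂²)(1 + 2‖b‖₂²) ) ), where erf(x) = (2/√π) ∫₀ˣ e^{−s²} ds is the error function. -/

import Mathlib

open MeasureTheory

/-- The standard Gaussian measure on `ℝ^d`: the law of `d` i.i.d. standard normals. -/
noncomputable def stdGaussian (d : ℕ) : Measure (Fin d → ℝ) :=
  Measure.pi fun _ : Fin d => ProbabilityTheory.gaussianReal 0 1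

/-- The error function `erf(x) = (2/√π) ∫₀ˣ e^{−s²} ds`. -/
noncomputable def erf (x : ℝ) : ℝ :=
  (2 / Real.sqrt Real.pi) * ∫ s in (0 : ℝ)..x, Real.exp (-(s ^ 2))

open ProbabilityTheory in
theorem pdf_mul (p δ y : ℝ) :
    gaussianPDFReal 0 1 y * Real.exp (-((p + δ * y) ^ 2)) =
      Real.sqrt (1 + 2 * δ ^ 2)⁻¹ * Real.exp (-(p ^ 2 * (1 + 2 * δ ^ 2)⁻¹)) *
        gaussianPDFReal (-2 * p * δ * (1 + 2 * δ ^ 2)⁻¹)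
          (Real.toNNReal (1 + 2 * δ ^ 2)⁻¹) y := by
  have h : 0 < 1 + 2 * δ ^ 2 := by positivity
  have h2 : 0 < (1 + 2 * δ ^ 2)⁻¹ := by positivity
  simp only [gaussianPDFReal, Real.coe_toNNReal _ h2.le, NNReal.coe_one]
  have hpi := Real.pi_pos
  rw [Real.sqrt_mul (by positivity) (1 + 2 * δ ^ 2)⁻¹, mul_one]
  have hs : 0 < Real.sqrt (1 + 2 * δ ^ 2)⁻¹ := Real.sqrt_pos.2 h2
  have hs2 : 0 < Real.sqrt (2 * Real.pi) := Real.sqrt_pos.2 (by positivity)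
  rw [mul_inv]
  generalize Real.sqrt (1 + 2 * δ ^ 2)⁻¹ = s at *
  have e : Real.exp (-(y - 0) ^ 2 / (2 * 1)) * Real.exp (-((p + δ * y) ^ 2)) =
    Real.exp (-(p ^ 2 * (1 + 2 * δ ^ 2)⁻¹)) *
     Real.exp (-(y - (-2 * p * δ * (1 + 2 * δ ^ 2)⁻¹)) ^ 2 / (2 * (1 + 2 * δ ^ 2)⁻¹)) := by
    rw [← Real.exp_add, ← Real.exp_add]
    congr 1
    field_simp
    ring
  calc _ = (Real.sqrt (2 * Real.pi))⁻¹ * (Real.exp (-(y - 0) ^ 2 / (2 * 1)) * Real.exp (-((p + δ * y) ^ 2))) := by ring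
    _ = _ := by
      rw [e]; field_simp

open ProbabilityTheory in
theorem gauss_transform (f : ℝ → ℝ) (p δ : ℝ) :
    ∫ y, f y * Real.exp (-((p + δ * y) ^ 2)) ∂(gaussianReal 0 1) =
      Real.sqrt (1 + 2 * δ ^ 2)⁻¹ * Real.exp (-(p ^ 2 * (1 + 2 * δ ^ 2)⁻¹)) *
        ∫ y, f y ∂(gaussianReal (-2 * p * δ * (1 + 2 * δ ^ 2)⁻¹)
          (Real.toNNReal (1 + 2 * δ ^ 2)⁻¹)) := by
  have h2 : 0 < (1 + 2 * δ ^ 2)⁻¹ := by positivity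
  rw [integral_gaussianReal_eq_integral_smul one_ne_zero,
    integral_gaussianReal_eq_integral_smul (by simpa using h2), ← integral_const_mul]
  congr 1; ext y
  have := pdf_mul p δ y
  simp only [smul_eq_mul]
  linear_combination f y * this

open ProbabilityTheory in
theorem gauss_exp (p δ : ℝ) :
    ∫ y, Real.exp (-((p + δ * y) ^ 2)) ∂(gaussianReal 0 1) =
      Real.sqrt (1 + 2 * δ ^ 2)⁻¹ * Real.exp (-(p ^ 2 * (1 + 2 * δ ^ 2)⁻¹)) := by
  simpa using gauss_transform (fun _ => 1) p δ

open ProbabilityTheory in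
theorem gauss_sq_exp (q : ℝ) (hq : 0 ≤ q) :
    ∫ y, y ^ 2 * Real.exp (-(q * y ^ 2)) ∂(gaussianReal 0 1) =
      Real.sqrt (1 + 2 * q)⁻¹ * (1 + 2 * q)⁻¹ := by
  have := gauss_transform (fun y => y ^ 2) 0 (Real.sqrt q)
  simp only [zero_add, mul_pow, Real.sq_sqrt hq] at this
  rw [this]
  have h2 : 0 ≤ (1 + 2 * q)⁻¹ := by positivity
  have hv := variance_id_gaussianReal (μ := 0) (v := Real.toNNReal (1 + 2 * q)⁻¹)
  rw [variance_of_integral_eq_zero (by fun_prop) (by simp)] at hv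
  simp [Real.coe_toNNReal _ h2] at hv ⊢
  left
  exact hv

theorem erf_hasDerivAt (x : ℝ) :
    HasDerivAt erf (2 / Real.sqrt Real.pi * Real.exp (-(x ^ 2))) x := by
  unfold erf
  have hc : Continuous fun s : ℝ => Real.exp (-(s ^ 2)) := by fun_prop
  exact (intervalIntegral.integral_hasDerivAt_right (hc.intervalIntegrable _ _)
    (hc.stronglyMeasurableAtFilter _ _) hc.continuousAt).const_mul _

theorem erf_cont : Continuous erf :=
  continuous_iff_continuousAt.2 fun x => (erf_hasDerivAt x).continuousAt

theorem erf_zero' : erf 0 = 0 := by simp [erf]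

theorem erf_neg' (x : ℝ) : erf (-x) = - erf x := by
  unfold erf
  have := intervalIntegral.integral_comp_neg (a := 0) (b := x) (fun s : ℝ => Real.exp (-(s ^ 2)))
  simp only [neg_zero, neg_sq] at this
  rw [this, intervalIntegral.integral_symm 0 (-x)]
  ring_nf

theorem erf_bdd : ∃ M : ℝ, 0 ≤ M ∧ ∀ x, |erf x| ≤ M := by
  have hi : Integrable fun s : ℝ => Real.exp (-(s ^ 2)) := by
    simpa using integrable_exp_neg_mul_sq (b := 1) one_pos
  refine ⟨2 / Real.sqrt Real.pi * ∫ s : ℝ, Real.exp (-(s ^ 2)), ?_, fun x => ?_⟩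
  · have : 0 ≤ ∫ s : ℝ, Real.exp (-(s ^ 2)) := integral_nonneg fun s => (Real.exp_pos _).le
    positivity
  unfold erf
  rw [abs_mul, abs_of_nonneg (a := 2 / Real.sqrt Real.pi) (by positivity)]
  gcongr
  rw [← Real.norm_eq_abs]
  refine (intervalIntegral.norm_integral_le_integral_norm_uIoc).trans ?_
  simp only [Real.norm_eq_abs, Real.abs_exp]
  exact setIntegral_le_integral hi (Filter.Eventually.of_forall fun s => (Real.exp_pos _).le)

theorem eq_of_hasDerivAt' {f g f' : ℝ → ℝ} (hf : ∀ x, HasDerivAt f (f' x) x)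
    (hg : ∀ x, HasDerivAt g (f' x) x) (h0 : f 0 = g 0) (x : ℝ) : f x = g x := by
  have h : ∀ x, HasDerivAt (fun x => f x - g x) 0 x := fun x => by
    exact ((hf x).sub (hg x)).congr_deriv (sub_self _)
  have := is_const_of_deriv_eq_zero (fun x => (h x).differentiableAt) (fun x => (h x).deriv) x 0
  simp only [h0] at this
  linarith

open ProbabilityTheory in
theorem integrable_abs_gauss : Integrable (fun x : ℝ => |x|) (gaussianReal 0 1) := by
  have := (memLp_id_gaussianReal (μ := 0) (v := 1) 1).integrable (by simp)
  exact this.abs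

open ProbabilityTheory in
theorem integrable_sq_gauss : Integrable (fun x : ℝ => x ^ 2) (gaussianReal 0 1) := by
  have := (memLp_id_gaussianReal (μ := 0) (v := 1) 2).integrable_sq
  exact this

open ProbabilityTheory in
theorem lemma1 (δ p : ℝ) :
    ∫ y, erf (p + δ * y) ∂(gaussianReal 0 1) = erf (p * Real.sqrt (1 + 2 * δ ^ 2)⁻¹) := by
  obtain ⟨M, hM0, hM⟩ := erf_bdd
  have hec := erf_cont
  have hpi : 0 ≤ 2 / Real.sqrt Real.pi := by positivity
  have h2 : 0 ≤ (1 + 2 * δ ^ 2)⁻¹ := by positivity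
  revert p
  refine eq_of_hasDerivAt' (f' := fun p => 2 / Real.sqrt Real.pi *
    (Real.sqrt (1 + 2 * δ ^ 2)⁻¹ * Real.exp (-(p ^ 2 * (1 + 2 * δ ^ 2)⁻¹))))
    (fun p => ?_) (fun p => ?_) ?_
  · have := (hasDerivAt_integral_of_dominated_loc_of_deriv_le (μ := gaussianReal 0 1)
      (F := fun p y => erf (p + δ * y))
      (F' := fun p y => 2 / Real.sqrt Real.pi * Real.exp (-((p + δ * y) ^ 2)))
      (x₀ := p) (s := Set.univ) (bound := fun _ => 2 / Real.sqrt Real.pi) Filter.univ_mem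
      (Filter.Eventually.of_forall fun p => (by fun_prop : Continuous _).aestronglyMeasurable)
      (Integrable.of_bound (by fun_prop : Continuous _).aestronglyMeasurable M
        (Filter.Eventually.of_forall fun y => hM _))
      (by fun_prop : Continuous _).aestronglyMeasurable
      (Filter.Eventually.of_forall fun y p _ => ?_) (integrable_const _)
      (Filter.Eventually.of_forall fun y p _ => ?_)).2
    · rwa [integral_const_mul, gauss_exp] at this
    · rw [Real.norm_eq_abs, abs_of_nonneg (by positivity)]
      refine mul_le_of_le_one_right hpi (Real.exp_le_one_iff.2 ?_)
      nlinarith [sq_nonneg (p + δ * y)]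
    · exact HasDerivAt.congr_deriv (HasDerivAt.comp (h₂ := erf) p (erf_hasDerivAt (p + δ * y))
        ((hasDerivAt_id p).add_const (δ * y))) (mul_one _)
  · refine HasDerivAt.congr_deriv (HasDerivAt.comp (h₂ := erf) p
      (erf_hasDerivAt (p * Real.sqrt (1 + 2 * δ ^ 2)⁻¹)) ((hasDerivAt_id p).mul_const _)) ?_
    rw [mul_pow, Real.sq_sqrt h2]
    simp; ring
  · simp only [zero_add, zero_mul, erf_zero']
    have h := integral_map (μ := gaussianReal 0 1) (φ := fun x : ℝ => -x) (by fun_prop)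
      (f := fun y => erf (δ * y)) (by fun_prop : Continuous _).aestronglyMeasurable
    rw [gaussianReal_map_neg] at h
    simp only [mul_neg, erf_neg', neg_zero, integral_neg] at h
    linarith

open ProbabilityTheory in
theorem lemma2 (t κ : ℝ) :
    ∫ x, x * Real.exp (-(t ^ 2 * x ^ 2)) * erf (κ * x) ∂(gaussianReal 0 1) =
      2 / Real.sqrt Real.pi * (κ / ((1 + 2 * t ^ 2) * Real.sqrt (1 + 2 * t ^ 2 + 2 * κ ^ 2))) := by
  obtain ⟨M, hM0, hM⟩ := erf_bdd
  have hec := erf_cont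
  have hpi : 0 ≤ 2 / Real.sqrt Real.pi := by positivity
  have hle : ∀ q x : ℝ, 0 ≤ q → Real.exp (-(q * x ^ 2)) ≤ 1 := fun q x hq =>
    Real.exp_le_one_iff.2 (by have : 0 ≤ q * x ^ 2 := by positivity
                              linarith)
  revert κ
  refine eq_of_hasDerivAt' (f' := fun κ => 2 / Real.sqrt Real.pi *
    (Real.sqrt (1 + 2 * (t ^ 2 + κ ^ 2))⁻¹ * (1 + 2 * (t ^ 2 + κ ^ 2))⁻¹))
    (fun κ => ?_) (fun κ => ?_) (by simp [erf_zero'])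
  · have := (hasDerivAt_integral_of_dominated_loc_of_deriv_le (μ := gaussianReal 0 1)
      (F := fun κ x => x * Real.exp (-(t ^ 2 * x ^ 2)) * erf (κ * x))
      (F' := fun κ x => 2 / Real.sqrt Real.pi * (x ^ 2 * Real.exp (-((t ^ 2 + κ ^ 2) * x ^ 2))))
      (x₀ := κ) (s := Set.univ) (bound := fun x => 2 / Real.sqrt Real.pi * x ^ 2) Filter.univ_mem
      (Filter.Eventually.of_forall fun p => (by fun_prop : Continuous _).aestronglyMeasurable)
      ((integrable_abs_gauss.mul_const M).mono' (by fun_prop : Continuous _).aestronglyMeasurable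
        (Filter.Eventually.of_forall fun x => ?_))
      (by fun_prop : Continuous _).aestronglyMeasurable
      (Filter.Eventually.of_forall fun x κ _ => ?_) (integrable_sq_gauss.const_mul _)
      (Filter.Eventually.of_forall fun x κ _ => ?_)).2
    · rwa [integral_const_mul, gauss_sq_exp _ (by positivity)] at this
    · rw [Real.norm_eq_abs, abs_mul, abs_mul, Real.abs_exp]
      exact mul_le_mul (mul_le_of_le_one_right (abs_nonneg _) (hle _ _ (by positivity))) (hM _)
        (abs_nonneg _) (abs_nonneg _)
    · rw [Real.norm_eq_abs, abs_of_nonneg (by positivity)]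
      exact mul_le_mul_of_nonneg_left
        (mul_le_of_le_one_right (by positivity) (hle _ _ (by positivity))) hpi
    · refine HasDerivAt.congr_deriv (((erf_hasDerivAt (κ * x)).comp κ ((hasDerivAt_id κ).mul_const x)).const_mul
        (x * Real.exp (-(t ^ 2 * x ^ 2)))) ?_
      rw [show -((t ^ 2 + κ ^ 2) * x ^ 2) = -(t ^ 2 * x ^ 2) + -((κ * x) ^ 2) by ring, Real.exp_add]
      ring
  · have hm : 0 < 1 + 2 * t ^ 2 + 2 * κ ^ 2 := by positivity
    have hm' : 0 < 1 + 2 * t ^ 2 := by positivity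
    have hs := Real.sqrt_pos.2 hm
    have h1 : HasDerivAt (fun κ : ℝ => 1 + 2 * t ^ 2 + 2 * κ ^ 2) (4 * κ) κ := by
      refine HasDerivAt.congr_deriv ((((hasDerivAt_id κ).pow 2).const_mul 2).const_add (1 + 2 * t ^ 2)) ?_
      simp; ring
    refine HasDerivAt.congr_deriv ((((hasDerivAt_id κ).div ((h1.sqrt hm.ne').const_mul (1 + 2 * t ^ 2))
      (by positivity)).const_mul (2 / Real.sqrt Real.pi))) ?_
    rw [show 1 + 2 * (t ^ 2 + κ ^ 2) = 1 + 2 * t ^ 2 + 2 * κ ^ 2 by ring, Real.sqrt_inv]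
    congr 1
    have hss := Real.sq_sqrt hm.le
    simp only [id]
    generalize Real.sqrt (1 + 2 * t ^ 2 + 2 * κ ^ 2) = s at *
    rw [← hss]
    field_simp
    linear_combination 2 * hss

open ProbabilityTheory in
theorem lemma3 (κ t : ℝ) :
    ∫ x, erf (t * x) * erf (κ * x) ∂(gaussianReal 0 1) =
      2 / Real.pi * Real.arcsin (2 * (t * κ) / Real.sqrt ((1 + 2 * t ^ 2) * (1 + 2 * κ ^ 2))) := by
  obtain ⟨M, hM0, hM⟩ := erf_bdd
  have hec := erf_cont
  have hpi : 0 ≤ 2 / Real.sqrt Real.pi := by positivity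
  have hle : ∀ q x : ℝ, 0 ≤ q → Real.exp (-(q * x ^ 2)) ≤ 1 := fun q x hq =>
    Real.exp_le_one_iff.2 (by have : 0 ≤ q * x ^ 2 := by positivity
                              linarith)
  revert t
  refine eq_of_hasDerivAt' (f' := fun t => 2 / Real.sqrt Real.pi * (2 / Real.sqrt Real.pi *
    (κ / ((1 + 2 * t ^ 2) * Real.sqrt (1 + 2 * t ^ 2 + 2 * κ ^ 2)))))
    (fun t => ?_) (fun t => ?_) (by simp [erf_zero'])
  · have := (hasDerivAt_integral_of_dominated_loc_of_deriv_le (μ := gaussianReal 0 1)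
      (F := fun t x => erf (t * x) * erf (κ * x))
      (F' := fun t x => 2 / Real.sqrt Real.pi * (x * Real.exp (-(t ^ 2 * x ^ 2)) * erf (κ * x)))
      (x₀ := t) (s := Set.univ) (bound := fun x => 2 / Real.sqrt Real.pi * (|x| * M)) Filter.univ_mem
      (Filter.Eventually.of_forall fun p => (by fun_prop : Continuous _).aestronglyMeasurable)
      (Integrable.of_bound (by fun_prop : Continuous _).aestronglyMeasurable (M * M)
        (Filter.Eventually.of_forall fun x => ?_))
      (by fun_prop : Continuous _).aestronglyMeasurable
      (Filter.Eventually.of_forall fun x t _ => ?_)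
      ((integrable_abs_gauss.mul_const M).const_mul _)
      (Filter.Eventually.of_forall fun x t _ => ?_)).2
    · rwa [integral_const_mul, lemma2] at this
    · rw [Real.norm_eq_abs, abs_mul]
      exact mul_le_mul (hM _) (hM _) (abs_nonneg _) hM0
    · rw [Real.norm_eq_abs, abs_mul, abs_of_nonneg hpi, abs_mul, abs_mul, Real.abs_exp]
      exact mul_le_mul_of_nonneg_left (mul_le_mul
        (mul_le_of_le_one_right (abs_nonneg _) (hle _ _ (by positivity))) (hM _)
        (abs_nonneg _) (abs_nonneg _)) hpi
    · refine HasDerivAt.congr_deriv (((erf_hasDerivAt (t * x)).comp t ((hasDerivAt_id t).mul_const x)).mul_const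
        (erf (κ * x))) ?_
      rw [mul_pow]
      ring
  · have hm : 0 < 1 + 2 * t ^ 2 + 2 * κ ^ 2 := by positivity
    have ha : 0 < 1 + 2 * t ^ 2 := by positivity
    have hb : 0 < 1 + 2 * κ ^ 2 := by positivity
    have h1 : HasDerivAt (fun t : ℝ => (1 + 2 * t ^ 2) * (1 + 2 * κ ^ 2))
        (4 * t * (1 + 2 * κ ^ 2)) t := by
      refine HasDerivAt.congr_deriv (((((hasDerivAt_id t).pow 2).const_mul 2).const_add 1).mul_const (1 + 2 * κ ^ 2)) ?_
      simp only [id, Nat.cast_ofNat]; ring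
    have hs := Real.sqrt_pos.2 (mul_pos ha hb)
    have h2 := (((hasDerivAt_id t).mul_const κ).const_mul 2).div (h1.sqrt (mul_pos ha hb).ne') hs.ne'
    simp only [id] at h2
    have hsq : 1 - (2 * (t * κ) / Real.sqrt ((1 + 2 * t ^ 2) * (1 + 2 * κ ^ 2))) ^ 2 =
        (1 + 2 * t ^ 2 + 2 * κ ^ 2) / ((1 + 2 * t ^ 2) * (1 + 2 * κ ^ 2)) := by
      rw [div_pow, Real.sq_sqrt (by positivity)]
      field_simp
      ring
    have hpos : 0 < 1 - (2 * (t * κ) / Real.sqrt ((1 + 2 * t ^ 2) * (1 + 2 * κ ^ 2))) ^ 2 := by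
      rw [hsq]; positivity
    have hne1 : 2 * (t * κ) / Real.sqrt ((1 + 2 * t ^ 2) * (1 + 2 * κ ^ 2)) ≠ -1 := by
      intro h; rw [h] at hpos; norm_num at hpos
    have hne2 : 2 * (t * κ) / Real.sqrt ((1 + 2 * t ^ 2) * (1 + 2 * κ ^ 2)) ≠ 1 := by
      intro h; rw [h] at hpos; norm_num at hpos
    refine HasDerivAt.congr_deriv (((Real.hasDerivAt_arcsin hne1 hne2).comp t h2).const_mul (2 / Real.pi)) ?_
    rw [hsq, Real.sqrt_div hm.le]
    have hs2 := Real.sqrt_pos.2 hm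
    have hss := Real.sq_sqrt (mul_pos ha hb).le
    have hpp := Real.sq_sqrt Real.pi_pos.le
    have hp := Real.sqrt_pos.2 Real.pi_pos
    generalize Real.sqrt Real.pi = r at *
    rw [← hpp]
    generalize Real.sqrt (1 + 2 * t ^ 2 + 2 * κ ^ 2) = w at *
    generalize Real.sqrt ((1 + 2 * t ^ 2) * (1 + 2 * κ ^ 2)) = s at *
    rw [hss]
    field_simp
    linear_combination 2 * κ * hss

open ProbabilityTheory in
theorem charFunDual_law (d : ℕ) (a b : Fin d → ℝ) (L : StrongDual ℝ (ℝ × ℝ)) :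
    charFunDual ((stdGaussian d).map fun z => (∑ i, a i * z i, ∑ i, b i * z i)) L =
      Complex.exp (-((L (1, 0)) ^ 2 * ∑ i, a i ^ 2 + 2 * L (1, 0) * L (0, 1) * ∑ i, a i * b i
        + (L (0, 1)) ^ 2 * ∑ i, b i ^ 2 : ℝ) / 2) := by
  rw [charFunDual_apply, integral_map (by fun_prop) (by fun_prop : Continuous _).aestronglyMeasurable]
  have key : ∀ z : Fin d → ℝ,
      Complex.exp (L (∑ i, a i * z i, ∑ i, b i * z i) * Complex.I) =
      ∏ i, Complex.exp ((L (1, 0) * a i + L (0, 1) * b i : ℝ) * (z i) * Complex.I) := by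
    intro z
    rw [← Complex.exp_sum, ← Finset.sum_mul]
    congr 2
    have : (∑ i, a i * z i, ∑ i, b i * z i) =
      (∑ i, a i * z i) • ((1, 0) : ℝ × ℝ) + (∑ i, b i * z i) • ((0, 1) : ℝ × ℝ) := by simp
    rw [this, map_add, map_smul, map_smul]
    push_cast
    simp only [smul_eq_mul, Finset.sum_mul]
    push_cast
    rw [← Finset.sum_add_distrib]
    refine Finset.sum_congr rfl fun i _ => by ring
  simp_rw [key]
  unfold _root_.stdGaussian
  rw [integral_fintype_prod_eq_prod (μ := fun _ : Fin d => gaussianReal 0 1)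
    (f := fun i (x : ℝ) =>
      Complex.exp ((L (1, 0) * a i + L (0, 1) * b i : ℝ) * x * Complex.I))]
  have : ∀ i, ∫ x : ℝ, Complex.exp ((L (1, 0) * a i + L (0, 1) * b i : ℝ) * x * Complex.I)
      ∂(gaussianReal 0 1) = Complex.exp (-((L (1, 0) * a i + L (0, 1) * b i : ℝ) : ℂ) ^ 2 / 2) := by
    intro i
    rw [← charFun_apply_real, charFun_gaussianReal]
    simp [neg_div]
  simp_rw [this]
  rw [← Complex.exp_sum]
  congr 1
  push_cast
  simp only [Finset.mul_sum, ← Finset.sum_add_distrib, ← Finset.sum_div, ← Finset.sum_neg_distrib]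
  congr 1
  refine Finset.sum_congr rfl fun i _ => by ring

theorem law_eq {d d' : ℕ} (a b : Fin d → ℝ) (a' b' : Fin d' → ℝ)
    (h1 : ∑ i, a i ^ 2 = ∑ i, a' i ^ 2) (h2 : ∑ i, b i ^ 2 = ∑ i, b' i ^ 2)
    (h3 : ∑ i, a i * b i = ∑ i, a' i * b' i) :
    ∫ z, erf (∑ i, a i * z i) * erf (∑ i, b i * z i) ∂(stdGaussian d) =
    ∫ z, erf (∑ i, a' i * z i) * erf (∑ i, b' i * z i) ∂(stdGaussian d') := by
  have hec := erf_cont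
  have hp : ∀ n, IsProbabilityMeasure (stdGaussian n) := fun n => by
    unfold _root_.stdGaussian; infer_instance
  have hm : (stdGaussian d).map (fun z => (∑ i, a i * z i, ∑ i, b i * z i)) =
      (stdGaussian d').map (fun z => (∑ i, a' i * z i, ∑ i, b' i * z i)) := by
    have := hp d
    have := hp d'
    have i1 := Measure.isProbabilityMeasure_map (μ := stdGaussian d)
      (f := fun z => (∑ i, a i * z i, ∑ i, b i * z i)) (by fun_prop)
    have i2 := Measure.isProbabilityMeasure_map (μ := stdGaussian d')
      (f := fun z => (∑ i, a' i * z i, ∑ i, b' i * z i)) (by fun_prop)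
    refine Measure.ext_of_charFunDual ?_
    ext L
    rw [charFunDual_law, charFunDual_law, h1, h2, h3]
  have hf : Continuous fun p : ℝ × ℝ => erf p.1 * erf p.2 := by fun_prop
  have e1 := integral_map (μ := stdGaussian d)
    (φ := fun z => (∑ i, a i * z i, ∑ i, b i * z i)) (by fun_prop) hf.aestronglyMeasurable
  have e2 := integral_map (μ := stdGaussian d')
    (φ := fun z => (∑ i, a' i * z i, ∑ i, b' i * z i)) (by fun_prop) hf.aestronglyMeasurable
  rw [← e1, ← e2, hm]

open ProbabilityTheory in
theorem two_dim (α β δ : ℝ) :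
    ∫ z, erf (α * z 0) * erf (β * z 0 + δ * z 1) ∂(stdGaussian 2) =
      (2 / Real.pi) * Real.arcsin ((2 * (α * β)) /
          Real.sqrt ((1 + 2 * α ^ 2) * (1 + 2 * (β ^ 2 + δ ^ 2)))) := by
  obtain ⟨M, hM0, hM⟩ := erf_bdd
  have hec := erf_cont
  have hmp := measurePreserving_piFinTwo (fun _ : Fin 2 => gaussianReal 0 1)
  have h1 := hmp.integral_comp (MeasurableEquiv.measurableEmbedding _)
    (fun p : ℝ × ℝ => erf (α * p.1) * erf (β * p.1 + δ * p.2))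
  simp only [MeasurableEquiv.piFinTwo_apply] at h1
  unfold _root_.stdGaussian
  rw [h1, integral_prod]
  · simp_rw [integral_const_mul, lemma1]
    have := lemma3 (β * Real.sqrt (1 + 2 * δ ^ 2)⁻¹) α
    have hδ : 0 < 1 + 2 * δ ^ 2 := by positivity
    have hs := Real.sqrt_pos.2 hδ
    have e : ∀ x, erf (α * x) * erf (β * x * Real.sqrt (1 + 2 * δ ^ 2)⁻¹) =
        erf (α * x) * erf (β * Real.sqrt (1 + 2 * δ ^ 2)⁻¹ * x) := fun x => by
      rw [mul_right_comm]
    simp_rw [e]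
    rw [this]
    · congr 2
      rw [show (1 + 2 * α ^ 2) * (1 + 2 * (β ^ 2 + δ ^ 2)) =
        ((1 + 2 * α ^ 2) * (1 + 2 * (β * Real.sqrt (1 + 2 * δ ^ 2)⁻¹) ^ 2)) * (1 + 2 * δ ^ 2) by
          rw [mul_pow, Real.sq_sqrt (by positivity)]; field_simp; ring]
      rw [Real.sqrt_mul (by positivity) (1 + 2 * δ ^ 2), Real.sqrt_inv]
      field_simp
  · refine Integrable.of_bound (by fun_prop : Continuous _).aestronglyMeasurable (M * M)
        (Filter.Eventually.of_forall fun x => ?_)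
    rw [Real.norm_eq_abs, abs_mul]
    exact mul_le_mul (hM _) (hM _) (abs_nonneg _) hM0

/-- The erf kernel: for `a, b ∈ ℝ^d`,
`∫ erf(⟨a,z⟩) erf(⟨b,z⟩) dγ(z) = (2/π) arcsin(2⟨a,b⟩/√((1+2‖a‖²)(1+2‖b‖²)))`. -/
theorem erf_kernel (d : ℕ) (hd : 1 ≤ d) (a b : Fin d → ℝ) :
    ∫ z, erf (∑ i, a i * z i) * erf (∑ i, b i * z i) ∂(stdGaussian d) =
      (2 / Real.pi) *
        Real.arcsin ((2 * ∑ i, a i * b i) /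
          Real.sqrt ((1 + 2 * ∑ i, a i ^ 2) * (1 + 2 * ∑ i, b i ^ 2))) := by
  have hcs := Finset.sum_mul_sq_le_sq_mul_sq Finset.univ a b
  have hA : 0 ≤ ∑ i, a i ^ 2 := Finset.sum_nonneg fun i _ => sq_nonneg _
  have hB : 0 ≤ ∑ i, b i ^ 2 := Finset.sum_nonneg fun i _ => sq_nonneg _
  obtain ⟨α, β, δ, h1, h2, h3⟩ : ∃ α β δ : ℝ, ∑ i, a i ^ 2 = α ^ 2 ∧
      ∑ i, b i ^ 2 = β ^ 2 + δ ^ 2 ∧ ∑ i, a i * b i = α * β := by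
    generalize ∑ i, a i ^ 2 = A at *
    generalize ∑ i, b i ^ 2 = B at *
    generalize ∑ i, a i * b i = C at *
    rcases hA.eq_or_lt with h | h
    · subst h
      refine ⟨0, 0, Real.sqrt B, by simp, by simp [Real.sq_sqrt hB], ?_⟩
      have : C ^ 2 = 0 := le_antisymm (by simpa using hcs) (sq_nonneg _)
      simpa using this
    · have hs := Real.sqrt_pos.2 h
      have hle : (C / Real.sqrt A) ^ 2 ≤ B := by
        rw [div_pow, Real.sq_sqrt hA, div_le_iff₀ h]
        linarith
      refine ⟨Real.sqrt A, C / Real.sqrt A, Real.sqrt (B - (C / Real.sqrt A) ^ 2),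
        (Real.sq_sqrt hA).symm, ?_, ?_⟩
      · rw [Real.sq_sqrt (by linarith)]; ring
      · field_simp
  rw [law_eq a b ![α, 0] ![β, δ] (by simpa using h1) (by simpa using h2) (by simpa using h3),
    h1, h2, h3, ← two_dim]
  simp
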